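/- Let d ≥ 1, 1 < p ≤ 2, and k₁, k₂ ∈ ℝ. Suppose there exists a constant C > 0 such that ‖(1−Δ)^{k₂/2}(ℱf)‖_{L^p(ℝ^d)} ≤ C·‖(1−Δ)^{k₁/2} f‖_{L^p(ℝ^d)} for every Schwartz function f on ℝ^d. Then k₂ ≤ 0. -/

import Mathlib

open MeasureTheory Complex Real
open scoped ENNReal RealInnerProductSpace

noncomputable section

abbrev E (d : ℕ) : Type := EuclideanSpace ℝ (Fin d)

/-- The Fourier transform `ℱu(ξ) = ∫ exp(-i x·ξ) u(x) dx`. -/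
def FT (d : ℕ) (u : E d → ℂ) (ξ : E d) : ℂ :=
  ∫ x, Complex.exp (-Complex.I * (⟪x, ξ⟫ : ℂ)) * u x

/-- The Bessel potential `(1-Δ)^{k/2} u = ℱ⁻¹((1+|ξ|²)^{k/2} ℱu)`. -/
def bessel (d : ℕ) (k : ℝ) (u : E d → ℂ) (x : E d) : ℂ :=
  (((2 * π) ^ d : ℝ) : ℂ)⁻¹ *
    ∫ ξ, Complex.exp (Complex.I * (⟪x, ξ⟫ : ℂ)) * (((1 + ‖ξ‖ ^ 2) ^ (k / 2) : ℝ) : ℂ) *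
      FT d u ξ

/-! Since `ℱℱf = (2π)^d f(-·)`, the function `(1-Δ)^{k/2} ℱf` is the Fourier transform of
`(1+|ξ|²)^{k/2} f`. Take `f ≥ 0` compactly supported and replace it by `f(· - a)`. The right-hand
side of the estimate does not change. On the left, the phase of `e^{-iξ·x}` varies little over the
support of `f(· - a)` when `|x|` is small, so there is no cancellation and
`|(1-Δ)^{k₂/2} ℱ(f(· - a))(x)|` is at least a constant times `(|a| - r)^{k₂}` uniformly on a ball
about the origin. For `k₂ > 0` the left-hand side is therefore unbounded as `|a| → ∞`.
-/

open Bornology Filter Function Metric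
open scoped ComplexOrder FourierTransform SchwartzMap

section FourierTransform

variable {d : ℕ}

theorem FT_eq_fourier (u : E d → ℂ) : FT d u = fun ξ => 𝓕 u ((2 * π)⁻¹ • ξ) := by
  ext ξ
  rw [Real.fourier_eq', FT]
  congr with x
  rw [inner_smul_right, smul_eq_mul]
  congr 2
  push_cast
  field_simp

theorem FT_FT {u : E d → ℂ} (hu : Continuous u) (hui : Integrable u) (hFu : Integrable (𝓕 u))
    (η : E d) : FT d (FT d u) η = (((2 * π) ^ d : ℝ) : ℂ) * u (-η) := by
  let v (y : E d) : ℂ := Complex.exp (((-2 * π * ⟪y, η⟫ : ℝ) : ℂ) * Complex.I) • 𝓕 u y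
  have integrand_eq (x : E d) :
      Complex.exp (-Complex.I * (⟪x, η⟫ : ℂ)) * FT d u x = v ((2 * π)⁻¹ • x) := by
    simp only [v, FT_eq_fourier, inner_smul_left, smul_eq_mul, conj_trivial]
    congr 2
    push_cast
    field_simp
  have integral_v : ∫ y, v y = u (-η) := by
    rw [← Real.fourier_eq', ← neg_neg η, ← Real.fourierInv_eq_fourier_neg,
      hu.fourierInv_fourier_eq hui hFu, neg_neg]
  rw [FT, integral_congr_ae (.of_forall integrand_eq), Measure.integral_comp_inv_smul, integral_v,
    finrank_euclideanSpace_fin, abs_of_pos (by positivity), real_smul]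

theorem FT_translate (u : E d → ℂ) (a ξ : E d) :
    FT d (fun x => u (x - a)) ξ = Complex.exp (-Complex.I * (⟪a, ξ⟫ : ℂ)) * FT d u ξ := by
  rw [FT, FT, ← integral_const_mul, ← integral_add_right_eq_self _ a]
  congr with x
  rw [add_sub_cancel_right, ← mul_assoc, ← Complex.exp_add, inner_add_left]
  congr 2
  push_cast
  ring

theorem norm_FT_translate (u : E d → ℂ) (a ξ : E d) :
    ‖FT d (fun x => u (x - a)) ξ‖ = ‖FT d u ξ‖ := by
  rw [FT_translate, norm_mul, neg_mul, ← mul_neg, ← ofReal_neg, norm_exp_I_mul_ofReal, one_mul]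

theorem half_integral_norm_le_norm_FT {u : E d → ℂ} (hu : 0 ≤ u) (hui : Integrable u) {x : E d}
    (hx : ∀ y ∈ support u, |⟪y, x⟫| ≤ 1) : 2⁻¹ * ∫ y, ‖u y‖ ≤ ‖FT d u x‖ := by
  have hint : Integrable fun y => Complex.exp (-Complex.I * (⟪y, x⟫ : ℂ)) * u y := by
    refine hui.bdd_mul (c := 1) (by fun_prop) (.of_forall fun y => ?_)
    rw [neg_mul, ← mul_neg, ← ofReal_neg, norm_exp_I_mul_ofReal]
  have re_integrand (y : E d) :
      (Complex.exp (-Complex.I * (⟪y, x⟫ : ℂ)) * u y).re = Real.cos ⟪y, x⟫ * ‖u y‖ := by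
    rw [eq_coe_norm_of_nonneg (hu y), re_mul_ofReal, norm_real, norm_norm, neg_mul, ← mul_neg,
      ← ofReal_neg, mul_comm I, exp_ofReal_mul_I_re, Real.cos_neg, mul_comm]
  have half_le_cos {t : ℝ} (ht : |t| ≤ 1) : 2⁻¹ ≤ Real.cos t := by
    linarith [Real.one_sub_sq_div_two_le_cos (x := t), (sq_le_one_iff_abs_le_one t).2 ht]
  calc 2⁻¹ * ∫ y, ‖u y‖ = ∫ y, 2⁻¹ * ‖u y‖ := (integral_const_mul _ _).symm
    _ ≤ ∫ y, (Complex.exp (-Complex.I * (⟪y, x⟫ : ℂ)) * u y).re := by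
      refine integral_mono (hui.norm.const_mul _) hint.re fun y => ?_
      simp only [re_integrand]
      by_cases hy : u y = 0
      · simp [hy]
      · exact mul_le_mul_of_nonneg_right (half_le_cos (hx y hy)) (norm_nonneg _)
    _ = (FT d u x).re := integral_re hint
    _ ≤ ‖FT d u x‖ := re_le_norm _

theorem integrable_norm_FT_rpow (f : 𝓢(E d, ℂ)) {p : ℝ} (hp : 0 < p) :
    Integrable fun x => ‖FT d f x‖ ^ p := by
  have h := ((𝓕 f).memLp (ENNReal.ofReal p)).integrable_norm_rpow
    (by simpa using hp) ENNReal.ofReal_ne_top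
  rw [ENNReal.toReal_ofReal hp.le] at h
  simpa only [FT_eq_fourier, SchwartzMap.fourier_coe] using
    h.comp_smul (R := (2 * π)⁻¹) (by positivity)

end FourierTransform

section BesselPotential

variable {d : ℕ} (k : ℝ)

/-- The Fourier symbol `(1+|ξ|²)^{k/2}` of the Bessel potential `(1-Δ)^{k/2}`. -/
def besselSymbol (ξ : E d) : ℝ :=
  (1 + ‖ξ‖ ^ 2) ^ (k / 2)

theorem hasTemperateGrowth_besselSymbol : (besselSymbol (d := d) k).HasTemperateGrowth :=
  hasTemperateGrowth_one_add_norm_sq_rpow (E d) (k / 2)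

variable {k} in
theorem norm_rpow_le_besselSymbol (hk : 0 ≤ k) (ξ : E d) : ‖ξ‖ ^ k ≤ besselSymbol k ξ :=
  calc ‖ξ‖ ^ k = (‖ξ‖ ^ 2) ^ (k / 2) := by
        rw [← Real.rpow_natCast_mul (norm_nonneg ξ)]
        congr 1
        push_cast
        ring
    _ ≤ besselSymbol k ξ :=
      Real.rpow_le_rpow (by positivity) (by linarith) (by positivity)

theorem besselSymbol_nonneg (ξ : E d) : 0 ≤ besselSymbol k ξ := by
  unfold besselSymbol
  positivity

/-- The Schwartz function `(1+|ξ|²)^{k/2} f`, whose Fourier transform is `(1-Δ)^{k/2} ℱf`. -/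
def besselMul (f : 𝓢(E d, ℂ)) : 𝓢(E d, ℂ) :=
  SchwartzMap.smulLeftCLM ℂ (besselSymbol k) f

theorem besselMul_apply (f : 𝓢(E d, ℂ)) (ξ : E d) :
    besselMul k f ξ = (besselSymbol k ξ : ℂ) * f ξ := by
  rw [besselMul, SchwartzMap.smulLeftCLM_apply_apply (hasTemperateGrowth_besselSymbol k), real_smul]

theorem bessel_FT (f : 𝓢(E d, ℂ)) : bessel d k (FT d f) = FT d (besselMul k f) := by
  ext x
  have hc : (((2 * π) ^ d : ℝ) : ℂ) ≠ 0 := ofReal_ne_zero.2 (by positivity)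
  rw [FT, ← integral_neg_eq_self, bessel, ← integral_const_mul]
  congr with ξ
  rw [FT_FT f.continuous f.integrable (𝓕 f).integrable, besselMul_apply, besselSymbol, norm_neg,
    inner_neg_left, real_inner_comm, ofReal_neg, neg_mul_neg]
  field_simp

theorem bessel_translate (u : E d → ℂ) (a x : E d) :
    bessel d k (fun y => u (y - a)) x = bessel d k u (x - a) := by
  simp only [bessel, FT_translate]
  congr with ξ
  have exp_inner_sub : Complex.exp (Complex.I * (⟪x - a, ξ⟫ : ℂ)) =
      Complex.exp (Complex.I * (⟪x, ξ⟫ : ℂ)) * Complex.exp (-Complex.I * (⟪a, ξ⟫ : ℂ)) := by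
    rw [← Complex.exp_add, inner_sub_left]
    congr 1
    push_cast
    ring
  rw [exp_inner_sub]
  ring

variable {k} in
theorem le_norm_bessel_FT_translate (hk : 0 ≤ k) {f : 𝓢(E d, ℂ)} (hf : 0 ≤ ⇑f) {r : ℝ}
    (hr : support f ⊆ closedBall 0 r) {a x : E d} (ha : r ≤ ‖a‖) (hx : r * ‖x‖ ≤ 1) :
    (‖a‖ - r) ^ k * (2⁻¹ * ∫ y, ‖f y‖) ≤ ‖bessel d k (FT d (f.compSubConstCLM ℂ a)) x‖ := by
  let u (y : E d) : ℂ := besselSymbol k (y + a) * f y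
  have translate_u : ⇑(besselMul k (f.compSubConstCLM ℂ a)) = fun y => u (y - a) := by
    ext y
    simp only [u, besselMul_apply, SchwartzMap.compSubConstCLM_apply, sub_add_cancel]
  have hu : 0 ≤ u := fun y =>
    mul_nonneg (zero_le_real.2 (besselSymbol_nonneg k _)) (hf y)
  have hui : Integrable u := by
    have h := (besselMul k (f.compSubConstCLM ℂ a)).integrable (μ := volume).comp_add_right a
    simpa only [translate_u, add_sub_cancel_right] using h
  have norm_le {y : E d} (hy : f y ≠ 0) : ‖y‖ ≤ r := mem_closedBall_zero_iff.1 (hr hy)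
  have phase_le : ∀ y ∈ support u, |⟪y, x⟫| ≤ 1 := fun y hy =>
    (abs_real_inner_le_norm y x).trans <|
      (mul_le_mul_of_nonneg_right (norm_le (right_ne_zero_of_mul hy)) (norm_nonneg x)).trans hx
  have weight_le (y : E d) : (‖a‖ - r) ^ k * ‖f y‖ ≤ ‖u y‖ := by
    by_cases hy : f y = 0
    · simp [u, hy]
    have norm_add_ge : ‖a‖ - r ≤ ‖y + a‖ := by
      linarith [norm_le hy, norm_sub_le (y + a) y, congrArg norm (add_sub_cancel_left y a)]
    rw [norm_mul, Complex.norm_of_nonneg (besselSymbol_nonneg k _)]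
    gcongr
    exact (Real.rpow_le_rpow (sub_nonneg.2 ha) norm_add_ge hk).trans
      (norm_rpow_le_besselSymbol hk _)
  calc (‖a‖ - r) ^ k * (2⁻¹ * ∫ y, ‖f y‖) = 2⁻¹ * ∫ y, (‖a‖ - r) ^ k * ‖f y‖ := by
        rw [integral_const_mul]
        ring
    _ ≤ 2⁻¹ * ∫ y, ‖u y‖ := by
      gcongr 2⁻¹ * ?_
      exact integral_mono (f.integrable.norm.const_mul _) hui.norm weight_le
    _ ≤ ‖FT d u x‖ := half_integral_norm_le_norm_FT hu hui phase_le
    _ = ‖bessel d k (FT d (f.compSubConstCLM ℂ a)) x‖ := by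
      rw [bessel_FT, translate_u, norm_FT_translate]

end BesselPotential

theorem mul_measureReal_rpow_le_integral_norm_rpow {α F : Type*} [MeasurableSpace α]
    [NormedAddCommGroup F] {μ : Measure α} {p : ℝ} (hp : 0 < p) {u : α → F}
    (hu : Integrable (fun x => ‖u x‖ ^ p) μ) {s : Set α} (hs : MeasurableSet s) (hμs : μ s ≠ ∞)
    {c : ℝ} (hc : 0 ≤ c) (hcu : ∀ x ∈ s, c ≤ ‖u x‖) :
    c * μ.real s ^ (1 / p) ≤ (∫ x, ‖u x‖ ^ p ∂μ) ^ (1 / p) :=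
  calc c * μ.real s ^ (1 / p) = (c ^ p * μ.real s) ^ (1 / p) := by
        rw [Real.mul_rpow (by positivity) measureReal_nonneg, ← Real.rpow_mul hc,
          mul_one_div_cancel hp.ne', Real.rpow_one]
    _ ≤ (∫ x, ‖u x‖ ^ p ∂μ) ^ (1 / p) := by
      gcongr
      calc c ^ p * μ.real s ≤ ∫ x in s, ‖u x‖ ^ p ∂μ :=
            setIntegral_ge_of_const_le_real hs hμs
              (fun x hx => Real.rpow_le_rpow hc (hcu x hx) hp.le) hu.integrableOn
        _ ≤ ∫ x, ‖u x‖ ^ p ∂μ :=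
          setIntegral_le_integral hu (.of_forall fun x => by positivity)

section SobolevNorm

variable {d : ℕ}

/-- The Sobolev norm `‖(1-Δ)^{k/2} u‖_{L^p}`, with a real exponent `p`. -/
def sobolevNorm (d : ℕ) (k p : ℝ) (u : E d → ℂ) : ℝ :=
  (∫ x, ‖bessel d k u x‖ ^ p) ^ (1 / p)

theorem sobolevNorm_translate (k p : ℝ) (u : E d → ℂ) (a : E d) :
    sobolevNorm d k p (fun x => u (x - a)) = sobolevNorm d k p u := by
  simp only [sobolevNorm, bessel_translate]
  rw [integral_sub_right_eq_self (fun x => ‖bessel d k u x‖ ^ p) a]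

theorem tendsto_sobolevNorm_FT_translate_atTop {k p : ℝ} (hk : 0 < k) (hp : 0 < p)
    {f : 𝓢(E d, ℂ)} (hf : 0 ≤ ⇑f) (hfc : HasCompactSupport f) (hf0 : f ≠ 0) :
    Tendsto (fun a => sobolevNorm d k p (FT d (f.compSubConstCLM ℂ a)))
      (cobounded (E d)) atTop := by
  obtain ⟨x₀, hx₀⟩ : ∃ x₀, f x₀ ≠ 0 := DFunLike.exists_ne hf0
  obtain ⟨r, hr0, hr⟩ := hfc.isCompact.isBounded.subset_closedBall_lt 0 0
  let B : Set (E d) := closedBall 0 r⁻¹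
  have hBpos : 0 < volume.real B :=
    ENNReal.toReal_pos (measure_closedBall_pos _ _ (inv_pos.2 hr0)).ne' measure_closedBall_lt_top.ne
  let m : ℝ := 2⁻¹ * ∫ y, ‖f y‖
  have hm : 0 < m := mul_pos (by norm_num) <|
    f.continuous.norm.integral_pos_of_hasCompactSupport_nonneg_nonzero hfc.norm
      (fun y => norm_nonneg (f y)) (norm_ne_zero_iff.2 hx₀)
  have lower_bound : ∀ᶠ a in cobounded (E d), (‖a‖ - r) ^ k * (m * volume.real B ^ (1 / p)) ≤
      sobolevNorm d k p (FT d (f.compSubConstCLM ℂ a)) := by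
    filter_upwards [eventually_cobounded_le_norm r] with a ha
    have hint : Integrable fun x => ‖bessel d k (FT d (f.compSubConstCLM ℂ a)) x‖ ^ p := by
      simpa only [bessel_FT] using integrable_norm_FT_rpow _ hp
    have hc : 0 ≤ (‖a‖ - r) ^ k * m :=
      mul_nonneg (Real.rpow_nonneg (sub_nonneg.2 ha) k) hm.le
    rw [← mul_assoc]
    refine mul_measureReal_rpow_le_integral_norm_rpow hp hint measurableSet_closedBall
      measure_closedBall_lt_top.ne hc fun x hx => ?_
    refine le_norm_bessel_FT_translate hk.le hf ((subset_tsupport f).trans hr) ha ?_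
    rw [mul_comm, ← le_div_iff₀ hr0, one_div]
    exact mem_closedBall_zero_iff.1 hx
  refine tendsto_atTop_mono' _ lower_bound (Tendsto.atTop_mul_const (by positivity) ?_)
  exact (tendsto_rpow_atTop hk).comp
    (tendsto_atTop_add_const_right _ (-r) tendsto_norm_cobounded_atTop)

end SobolevNorm

theorem exists_schwartz_nonneg_hasCompactSupport_ne_zero (d : ℕ) :
    ∃ f : 𝓢(E d, ℂ), 0 ≤ ⇑f ∧ HasCompactSupport f ∧ f ≠ 0 := by
  let φ : ContDiffBump (0 : E d) := default
  have hsupp : HasCompactSupport fun x => (φ x : ℂ) :=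
    φ.hasCompactSupport.comp_left (g := ((↑) : ℝ → ℂ)) ofReal_zero
  have hsmooth : ContDiff ℝ (⊤ : ℕ∞) fun x => (φ x : ℂ) := ofRealCLM.contDiff.comp φ.contDiff
  refine ⟨hsupp.toSchwartzMap hsmooth, fun x => zero_le_real.2 φ.nonneg, hsupp, fun h => ?_⟩
  have hφ0 : (φ 0 : ℂ) = 0 := DFunLike.congr_fun h 0
  simp [φ.one_of_mem_closedBall (mem_closedBall_self φ.rIn_pos.le)] at hφ0

theorem stmt19_general {d : ℕ} (hd : 1 ≤ d) {p : ℝ} (hp : 0 < p) {k₁ k₂ C : ℝ}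
    (hbound : ∀ f : 𝓢(E d, ℂ), sobolevNorm d k₂ p (FT d f) ≤ C * sobolevNorm d k₁ p f) :
    k₂ ≤ 0 := by
  by_contra! hk
  have : Nonempty (Fin d) := ⟨⟨0, hd⟩⟩
  obtain ⟨f, hf, hfc, hf0⟩ := exists_schwartz_nonneg_hasCompactSupport_ne_zero d
  obtain ⟨a, ha⟩ := ((tendsto_sobolevNorm_FT_translate_atTop hk hp hf hfc hf0).eventually_gt_atTop
    (C * sobolevNorm d k₁ p f)).exists
  have hbound_a := hbound (f.compSubConstCLM ℂ a)
  rw [show ⇑(f.compSubConstCLM ℂ a) = fun x => f (x - a) from rfl, sobolevNorm_translate]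
    at hbound_a
  exact ha.not_ge hbound_a

/-- necessity of `k₂ ≤ 0` for `1 < p ≤ 2`: if
`‖(1-Δ)^{k₂/2}(ℱf)‖_{L^p} ≤ C·‖(1-Δ)^{k₁/2}f‖_{L^p}` for all Schwartz `f`,
then `k₂ ≤ 0`. -/
theorem stmt19 (d : ℕ) (hd : 1 ≤ d) (p : ℝ) (hp1 : 1 < p) (hp2 : p ≤ 2) (k₁ k₂ : ℝ)
    (h : ∃ C > (0 : ℝ), ∀ f : SchwartzMap (E d) ℂ,
      (∫ x : E d, ‖bessel d k₂ (FT d (⇑f)) x‖ ^ p) ^ (1 / p) ≤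
        C * (∫ x : E d, ‖bessel d k₁ (⇑f) x‖ ^ p) ^ (1 / p)) :
    k₂ ≤ 0 := by
  obtain ⟨C, -, hbound⟩ := h
  exact stmt19_general hd (zero_lt_one.trans hp1) hbound
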